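/- arXiv:2605.26034 — 3 statements merged into one kernel-verified Lean document; each statement's English description precedes it below -/
import Mathlib

section
/- Let q, k, n be integers with q ≥ 1 and k ≥ n ≥ 1, and let Δ ≥ 1 be a real number. Let c be a function from subsets of {1,…,q} to the natural numbers such that: (i) c(Γ) ≥ 1 for every nonempty subset Γ; (ii) c(Γ₁ ∪ Γ₂) ≤ c(Γ₁) + c(Γ₂) for all subsets Γ₁, Γ₂; (iii) #Γ ≤ Δ·(k − n + c(Γ)) for every nonempty subset Γ. Then there exists a subset Γ of {1,…,q} such that #Γ ≥ q − Δ·(k − ⌈n/2⌉) and such that for every nonempty subset Γ′ of Γ one has #Γ′ ≤ ((2k − n + 1)/(n + 1))·Δ·c(Γ′). -/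
/-- Combinatorial core of Lemma 4.1: reducing the distributive constant
by discarding at most `Δ·(k − ⌈n/2⌉)` indices. -/
theorem stmt_0 (q k n : ℕ) (hq : 1 ≤ q) (hn : 1 ≤ n) (hkn : n ≤ k)
    (Δ : ℝ) (hΔ : 1 ≤ Δ)
    (c : Finset (Fin q) → ℕ)
    (hpos : ∀ Γ : Finset (Fin q), Γ.Nonempty → 1 ≤ c Γ)
    (hsub : ∀ Γ₁ Γ₂ : Finset (Fin q), c (Γ₁ ∪ Γ₂) ≤ c Γ₁ + c Γ₂)
    (hdist : ∀ Γ : Finset (Fin q), Γ.Nonempty →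
      (Γ.card : ℝ) ≤ Δ * ((k : ℝ) - n + c Γ)) :
    ∃ Γ : Finset (Fin q),
      (q : ℝ) - Δ * ((k : ℝ) - ⌈(n : ℝ) / 2⌉) ≤ (Γ.card : ℝ) ∧
      ∀ Γ' : Finset (Fin q), Γ' ⊆ Γ → Γ'.Nonempty →
        (Γ'.card : ℝ) ≤ ((2 * (k : ℝ) - n + 1) / ((n : ℝ) + 1)) * Δ * c Γ' := by
  classical
  set D : ℝ := (2 * (k : ℝ) - n + 1) / ((n : ℝ) + 1) with hD
  have hn1 : (0 : ℝ) < (n : ℝ) + 1 := by positivity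
  have hknR : (n : ℝ) ≤ k := by exact_mod_cast hkn
  have hDn : D * ((n : ℝ) + 1) = 2 * (k : ℝ) - n + 1 := by
    rw [hD]; field_simp
  have hDpos : 0 < D := by
    rw [hD]; apply div_pos <;> linarith
  have hΔ0 : 0 < Δ := by linarith
  have hceil : (⌈(n : ℝ) / 2⌉ : ℤ) ≤ (n : ℤ) - (n / 2 : ℕ) := by
    rw [Int.ceil_le]
    have h : n ≤ 2 * (n - n / 2) ∧ n / 2 ≤ n := by omega
    have h1 : (n : ℤ) ≤ 2 * ((n : ℤ) - (n / 2 : ℕ)) := by omega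
    have h2 : (n : ℝ) ≤ 2 * (((n : ℤ) - (n / 2 : ℕ) : ℤ) : ℝ) := by exact_mod_cast h1
    linarith
  have hceilR : ((⌈(n : ℝ) / 2⌉ : ℤ) : ℝ) ≤ (n : ℝ) - ((n / 2 : ℕ) : ℝ) := by
    exact_mod_cast hceil
  let bad : Finset (Finset (Fin q)) :=
    Finset.univ.filter (fun U => U.Nonempty ∧ D * Δ * (c U : ℝ) < (U.card : ℝ))
  by_cases hb : bad.Nonempty
  · obtain ⟨U, hU, hmax⟩ := Finset.exists_max_image bad Finset.card hb
    obtain ⟨hUne, hUbad⟩ := (Finset.mem_filter.mp hU).2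
    have hd := hdist U hUne
    have hc : 2 * c U ≤ n := by
      by_contra hcon
      have h1 : (n : ℝ) + 1 ≤ 2 * (c U : ℝ) := by
        have : n + 1 ≤ 2 * c U := by omega
        exact_mod_cast this
      have h2 : D * (c U : ℝ) < (k : ℝ) - n + c U := by
        by_contra h3
        push Not at h3
        have := mul_le_mul_of_nonneg_left h3 hΔ0.le
        nlinarith
      have h4 : (D - 1) * ((n : ℝ) + 1) = 2 * ((k : ℝ) - n) := by linarith
      have h5 : 0 ≤ D - 1 := by
        by_contra h6
        push Not at h6
        nlinarith
      nlinarith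
    have hc2 : (c U : ℝ) ≤ ((n / 2 : ℕ) : ℝ) := by
      have : c U ≤ n / 2 := by omega
      exact_mod_cast this
    refine ⟨Uᶜ, ?_, ?_⟩
    · have hcard : (U.card : ℝ) + (Uᶜ.card : ℝ) = q := by
        have := Finset.card_add_card_compl U
        rw [Fintype.card_fin] at this
        exact_mod_cast this
      have : Δ * ((k : ℝ) - n + c U) ≤ Δ * ((k : ℝ) - ⌈(n : ℝ) / 2⌉) :=
        mul_le_mul_of_nonneg_left (by linarith) hΔ0.le
      linarith
    · intro V hV hVne
      by_contra hcon
      push Not at hcon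
      have hdisj : Disjoint U V := by
        rw [Finset.disjoint_left]
        intro x hx hxV
        exact Finset.mem_compl.mp (hV hxV) hx
      have hcardU := Finset.card_union_of_disjoint hdisj
      have hmem : U ∪ V ∈ bad := by
        refine Finset.mem_filter.mpr ⟨Finset.mem_univ _, hUne.mono Finset.subset_union_left, ?_⟩
        have h1 : (c (U ∪ V) : ℝ) ≤ c U + c V := by exact_mod_cast hsub U V
        have h2 := mul_le_mul_of_nonneg_left h1 (mul_pos hDpos hΔ0).le
        rw [hcardU]
        push_cast
        linarith
      have := hmax _ hmem
      have := hVne.card_pos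
      omega
  · refine ⟨Finset.univ, ?_, ?_⟩
    · have : 0 ≤ Δ * ((k : ℝ) - ⌈(n : ℝ) / 2⌉) := by
        apply mul_nonneg hΔ0.le
        have : (0 : ℝ) ≤ ((n / 2 : ℕ) : ℝ) := Nat.cast_nonneg _
        linarith
      simp only [Finset.card_univ, Fintype.card_fin]
      linarith
    · intro V _ hVne
      by_contra hcon
      push Not at hcon
      exact hb ⟨V, Finset.mem_filter.mpr ⟨Finset.mem_univ _, hVne, hcon⟩⟩
end

section
/- Let q, k, n, N be integers with q ≥ 1, k ≥ n ≥ 1 and N ≥ k. Let c be a function from subsets of {1,…,q} to the natural numbers such that: (i) c(Γ) ≥ 1 for every nonempty subset Γ; (ii) c(Γ₁ ∪ Γ₂) ≤ c(Γ₁) + c(Γ₂) for all subsets Γ₁, Γ₂; (iii) #Γ ≤ N − n + c(Γ) for every nonempty subset Γ. Then there exists a subset Γ of {1,…,q} such that #Γ ≥ q − N + ⌈n/2⌉ and such that for every nonempty subset Γ′ of Γ one has #Γ′ ≤ ((2N − n + 1)/(n + 1))·c(Γ′). -/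
/-- Combinatorial core of Lemma 4.2: the `N`-subgeneral position case. -/
theorem stmt_1 (q k n N : ℕ) (hq : 1 ≤ q) (hn : 1 ≤ n) (hkn : n ≤ k) (hNk : k ≤ N)
    (c : Finset (Fin q) → ℕ)
    (hpos : ∀ Γ : Finset (Fin q), Γ.Nonempty → 1 ≤ c Γ)
    (hsub : ∀ Γ₁ Γ₂ : Finset (Fin q), c (Γ₁ ∪ Γ₂) ≤ c Γ₁ + c Γ₂)
    (hsubgen : ∀ Γ : Finset (Fin q), Γ.Nonempty →
      (Γ.card : ℝ) ≤ (N : ℝ) - n + c Γ) :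
    ∃ Γ : Finset (Fin q),
      (q : ℝ) - N + ⌈(n : ℝ) / 2⌉ ≤ (Γ.card : ℝ) ∧
      ∀ Γ' : Finset (Fin q), Γ' ⊆ Γ → Γ'.Nonempty →
        (Γ'.card : ℝ) ≤ ((2 * (N : ℝ) - n + 1) / ((n : ℝ) + 1)) * c Γ' := by
  classical
  have hnN : (n : ℝ) ≤ N := by exact_mod_cast hkn.trans hNk
  have hn0 : (0 : ℝ) < (n : ℝ) + 1 := by positivity
  set d : ℝ := (2 * (N : ℝ) - n + 1) / ((n : ℝ) + 1) with hd
  have hd0 : 0 ≤ d := div_nonneg (by linarith [(Nat.cast_nonneg n : (0 : ℝ) ≤ n)]) hn0.le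
  have hdm : d * ((n : ℝ) + 1) = 2 * (N : ℝ) - n + 1 := by
    rw [hd]; field_simp
  let S : Finset (Finset (Fin q)) :=
    Finset.univ.filter (fun B => B = ∅ ∨ d * c B < (B.card : ℝ))
  obtain ⟨B, hBS, hmax⟩ := Finset.exists_max_image S Finset.card ⟨∅, by simp [S]⟩
  have hB : B = ∅ ∨ d * c B < (B.card : ℝ) := by simpa [S] using hBS
  have hcard : 2 * B.card + n ≤ 2 * N := by
    rcases B.eq_empty_or_nonempty with h | h
    · subst h
      simp only [Finset.card_empty]
      omega
    · have hb := hB.resolve_left h.ne_empty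
      have h1 := hsubgen B h
      have h1' : B.card + n ≤ N + c B := by
        have : (B.card : ℝ) + n ≤ N + c B := by linarith
        exact_mod_cast this
      have h2 : 2 * c B < n + 1 := by
        by_contra hcon
        have h3 : (n : ℝ) + 1 ≤ 2 * c B := by exact_mod_cast not_lt.mp hcon
        have h4 : d * c B < N - n + c B := by linarith
        have h5 : (2 * (N : ℝ) - n + 1) * c B < (N - n + c B) * ((n : ℝ) + 1) := by
          rw [← hdm]; nlinarith
        nlinarith [mul_nonneg (sub_nonneg.2 hnN) (sub_nonneg.2 h3)]
      omega
  refine ⟨Bᶜ, ?_, ?_⟩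
  · have hle : B.card ≤ q := by simpa using Finset.card_le_univ B
    have hc : ⌈(n : ℝ) / 2⌉ ≤ (N : ℤ) - B.card := by
      rw [Int.ceil_le]
      have : 2 * (B.card : ℝ) + n ≤ 2 * N := by exact_mod_cast hcard
      push_cast
      linarith
    have hc' : ((⌈(n : ℝ) / 2⌉ : ℤ) : ℝ) ≤ (N : ℝ) - B.card := by exact_mod_cast hc
    rw [Finset.card_compl, Fintype.card_fin, Nat.cast_sub hle]
    linarith
  · intro A hA hAne
    by_contra hcon
    have hcon := not_le.mp hcon
    have hdis : Disjoint B A := by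
      rw [Finset.disjoint_left]
      intro x hx hxA
      exact (Finset.mem_compl.1 (hA hxA)) hx
    have hu : (B ∪ A).card = B.card + A.card := Finset.card_union_of_disjoint hdis
    have hmem : B ∪ A ∈ S := by
      simp only [S, Finset.mem_filter, Finset.mem_univ, true_and]
      right
      rcases hB with h | h
      · subst h
        simpa using hcon
      · have h6 : (c (B ∪ A) : ℝ) ≤ c B + c A := by exact_mod_cast hsub B A
        have h7 := mul_le_mul_of_nonneg_left h6 hd0
        rw [hu]
        push_cast
        linarith
    have := hmax _ hmem
    have := hAne.card_pos
    omega
end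

section
/- Let q ≥ 1 be an integer, let M > 0 be a real number, and let c be a function from subsets of {1,…,q} to the natural numbers satisfying c(Γ₁ ∪ Γ₂) ≤ c(Γ₁) + c(Γ₂) for all subsets Γ₁, Γ₂. Define S to be the family of all nonempty subsets Γ of {1,…,q} with #Γ > M·c(Γ). If Γ₁ ∈ S has maximal cardinality among all members of S, then Γ₁ ∩ Γ₂ ≠ ∅ for every Γ₂ ∈ S. -/
/-- The Claim in the proof of Lemma 4.1: a maximal-cardinality "bad" set
meets every other "bad" set. -/
theorem stmt_2 (q : ℕ) (hq : 1 ≤ q) (M : ℝ) (hM : 0 < M)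
    (c : Finset (Fin q) → ℕ)
    (hsub : ∀ Γ₁ Γ₂ : Finset (Fin q), c (Γ₁ ∪ Γ₂) ≤ c Γ₁ + c Γ₂)
    (S : Set (Finset (Fin q)))
    (hS : S = {Γ : Finset (Fin q) | Γ.Nonempty ∧ M * c Γ < (Γ.card : ℝ)})
    (Γ₁ : Finset (Fin q)) (hΓ₁ : Γ₁ ∈ S)
    (hmax : ∀ Γ ∈ S, Γ.card ≤ Γ₁.card) :
    ∀ Γ₂ ∈ S, (Γ₁ ∩ Γ₂).Nonempty := by
  subst hS
  intro Γ₂ h2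
  by_contra hne
  rw [Finset.not_nonempty_iff_eq_empty, ← Finset.disjoint_iff_inter_eq_empty] at hne
  have hcard := Finset.card_union_of_disjoint hne
  obtain ⟨n1, l1⟩ := hΓ₁
  obtain ⟨n2, l2⟩ := h2
  have hc : (c (Γ₁ ∪ Γ₂) : ℝ) ≤ c Γ₁ + c Γ₂ := by exact_mod_cast hsub Γ₁ Γ₂
  have hm := mul_le_mul_of_nonneg_left hc hM.le
  have hU := hmax (Γ₁ ∪ Γ₂) ⟨n1.mono Finset.subset_union_left, by
    rw [hcard]
    push_cast
    linarith⟩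
  have := n2.card_pos
  omega
end
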